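/- arXiv:2206.10875 — 2 statements merged into one kernel-verified Lean document; each statement's English description precedes it below -/
import Mathlib

section
/- Let d ≥ 1, ᾱ ∈ (0,1), r > 0, ε ≥ 0, and x₀, Δx ∈ ℝ^d with ‖Δx‖₂ < r. Let μ = N(√ᾱ·x₀, (1−ᾱ)·I_d) and ν = N(√ᾱ·(x₀+Δx), (1−ᾱ)·I_d). Let (𝒴, Σ) be any measurable space (the label space) and κ a Markov kernel from ℝ^d to 𝒴 (modeling the composition of the reverse denoising process and the base classifier). Then for every label y ∈ 𝒴 with {y} measurable, (ν.bind κ)(𝒴 \ {y}) ≤ e^ε·(μ.bind κ)(𝒴 \ {y}) + Φ( r·√ᾱ/(2·√(1−ᾱ)) − ε·√(1−ᾱ)/(r·√ᾱ) ); i.e., the probability that the purified-and-classified adversarial input is misclassified is at most e^ε times the corresponding probability for the clean input, plus δ. -/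
open MeasureTheory ProbabilityTheory Real

/-- The Gaussian probability measure `N(m, σ² I_d)` on `ℝ^d`, given by its Lebesgue density. -/
noncomputable def gaussian (d : ℕ) (m : EuclideanSpace ℝ (Fin d)) (σ2 : ℝ) :
    Measure (EuclideanSpace ℝ (Fin d)) :=
  volume.withDensity fun x => ENNReal.ofReal
    ((2 * π * σ2) ^ (-(d : ℝ) / 2) * Real.exp (-‖x - m‖ ^ 2 / (2 * σ2)))

/-- The standard normal cumulative distribution function `Φ`. -/
noncomputable def stdNormalCDF (x : ℝ) : ℝ := (gaussianReal 0 1 (Set.Iic x)).toReal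

lemma gaussian_meas (d : ℕ) (m : EuclideanSpace ℝ (Fin d)) (s : ℝ) :
    Measurable fun x : EuclideanSpace ℝ (Fin d) =>
    ((2 * π * s) ^ (-(d : ℝ) / 2) * Real.exp (-‖x - m‖ ^ 2 / (2 * s))) := by
  fun_prop

lemma gaussian_integral (d : ℕ) (m : EuclideanSpace ℝ (Fin d)) (s : ℝ) (hs : 0 < s)
    (u : EuclideanSpace ℝ (Fin d)) (t : ℝ) :
    ∫ x, Complex.exp (t * (inner ℝ u (x - m) : ℝ) * Complex.I) ∂(gaussian d m s) =
      Complex.exp (-(t ^ 2 * (‖u‖ ^ 2 * s) / 2 : ℝ)) := by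
  unfold gaussian
  rw [integral_withDensity_eq_integral_toReal_smul
    (gaussian_meas d m s).ennreal_ofReal (by simp)]
  have hp : 0 < 2 * π * s := by positivity
  have h0 : ∀ x : EuclideanSpace ℝ (Fin d), (ENNReal.ofReal
    ((2 * π * s) ^ (-(d : ℝ) / 2) * Real.exp (-‖x - m‖ ^ 2 / (2 * s)))).toReal •
      Complex.exp (t * (inner ℝ u (x - m) : ℝ) * Complex.I) =
      (((2 * π * s) ^ (-(d : ℝ) / 2) : ℝ) : ℂ) *
       Complex.exp (-(((1 / (2 * s) : ℝ)) : ℂ) * ‖x - m‖ ^ 2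
        + (t * Complex.I) * (inner ℝ u (x - m) : ℝ)) := by
    intro x
    rw [ENNReal.toReal_ofReal (by positivity), Complex.real_smul, Complex.exp_add]
    push_cast
    rw [mul_assoc, ← Complex.exp_add, ← Complex.exp_add]
    congr 2
    ring
  simp_rw [h0]
  rw [integral_const_mul, integral_sub_right_eq_self (fun x : EuclideanSpace ℝ (Fin d) =>
    Complex.exp (-(((1 / (2 * s) : ℝ)) : ℂ) * ‖x‖ ^ 2
        + (t * Complex.I) * (inner ℝ u x : ℝ))) m,
    GaussianFourier.integral_cexp_neg_mul_sq_norm_add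
      (by rw [Complex.ofReal_re]; positivity)]
  have h1 : (π / ((1 / (2 * s) : ℝ) : ℂ)) = ((2 * π * s : ℝ) : ℂ) := by
    push_cast; field_simp
  have hs' : (s : ℂ) ≠ 0 := by exact_mod_cast hs.ne'
  rw [h1, ← mul_assoc, Complex.ofReal_cpow hp.le, finrank_euclideanSpace_fin,
    ← Complex.cpow_add _ _ (by exact_mod_cast hp.ne')]
  have h2 : ((-(d : ℝ) / 2 : ℝ) : ℂ) + (d : ℂ) / 2 = 0 := by push_cast; ring
  rw [h2, Complex.cpow_zero, one_mul]
  congr 1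
  rw [mul_pow, Complex.I_sq]
  push_cast
  field_simp
  ring

lemma gaussian_univ (d : ℕ) (m : EuclideanSpace ℝ (Fin d)) (s : ℝ) (hs : 0 < s) :
    IsFiniteMeasure (gaussian d m s) := by
  by_contra hn
  have h := gaussian_integral d m s hs 0 0
  have : ¬ Integrable (fun _ => (1 : ℂ)) (gaussian d m s) := by
    rw [integrable_const_iff]; simp [hn]
  simp [Measure.real] at h
  rw [ENNReal.toReal_eq_one_iff] at h
  exact hn ⟨by simp [h]⟩

lemma gaussian_map (d : ℕ) (m : EuclideanSpace ℝ (Fin d)) (s : ℝ) (hs : 0 < s)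
    (u : EuclideanSpace ℝ (Fin d)) (hu : ‖u‖ ^ 2 * s = 1) :
    (gaussian d m s).map (fun x => (inner ℝ u (x - m) : ℝ)) = gaussianReal 0 1 := by
  have := gaussian_univ d m s hs
  apply Measure.ext_of_charFun
  ext t
  rw [charFun_gaussianReal, charFun_apply_real, integral_map (by fun_prop) (by fun_prop),
    gaussian_integral d m s hs u t, hu]
  congr 1
  push_cast
  ring

/-- Main bound in `ℝ≥0∞`. -/
lemma gaussian_bound (d : ℕ) (m h : EuclideanSpace ℝ (Fin d)) (s ε : ℝ) (hs : 0 < s)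
    (hh : h ≠ 0) (g : EuclideanSpace ℝ (Fin d) → ENNReal) (hg : Measurable g)
    (hg1 : ∀ x, g x ≤ 1) :
    ∫⁻ x, g x ∂(gaussian d (m + h) s) ≤
      ENNReal.ofReal (Real.exp ε) * ∫⁻ x, g x ∂(gaussian d m s) +
      gaussianReal 0 1 (Set.Iic (‖h‖ / (2 * √s) - ε * √s / ‖h‖)) := by
  have hn : 0 < ‖h‖ := norm_pos_iff.mpr hh
  have hq : 0 < √s := Real.sqrt_pos.mpr hs
  have hqs : √s ^ 2 = s := Real.sq_sqrt hs.le
  set c := ‖h‖ / (2 * √s) - ε * √s / ‖h‖ with hc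
  set u : EuclideanSpace ℝ (Fin d) := (-(1 / (‖h‖ * √s))) • h with hu
  have hu1 : ‖u‖ ^ 2 * s = 1 := by
    rw [hu, norm_smul, norm_neg, Real.norm_of_nonneg (by positivity), mul_pow, div_pow, mul_pow,
      hqs]
    field_simp
  set T : EuclideanSpace ℝ (Fin d) → ℝ := fun x => inner ℝ u (x - (m + h)) with hT
  have hTm : Measurable T := by fun_prop
  have hS : MeasurableSet (T ⁻¹' Set.Iic c) := hTm measurableSet_Iic
  rw [← gaussian_map d (m + h) s hs u hu1, Measure.map_apply hTm measurableSet_Iic,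
    ← lintegral_add_compl _ hS, add_comm]
  gcongr
  · unfold gaussian
    rw [restrict_withDensity hS.compl,
      lintegral_withDensity_eq_lintegral_mul _ (gaussian_meas d (m + h) s).ennreal_ofReal hg,
      lintegral_withDensity_eq_lintegral_mul _ (gaussian_meas d m s).ennreal_ofReal hg,
      ← lintegral_const_mul _ ((gaussian_meas d m s).ennreal_ofReal.mul hg)]
    refine le_trans ?_ (setLIntegral_le_lintegral (T ⁻¹' Set.Iic c)ᶜ _)
    refine setLIntegral_mono' hS.compl fun x hx => ?_
    simp only [Pi.mul_apply]
    rw [← mul_assoc]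
    gcongr
    rw [← ENNReal.ofReal_mul (by positivity)]
    apply ENNReal.ofReal_le_ofReal
    rw [mul_left_comm, ← Real.exp_add]
    gcongr
    have hx' : c < T x := by simpa using hx
    have e1 : x - m = (x - (m + h)) + h := by abel
    rw [e1, norm_add_sq_real]
    set z := x - (m + h) with hz
    have e2 : T x = -(inner ℝ z h / (‖h‖ * √s)) := by
      simp only [hT, hu, inner_smul_left, real_inner_comm]
      simp
      ring
    rw [e2, hc] at hx'
    have e3 : inner ℝ z h < ε * s - ‖h‖ ^ 2 / 2 := by
      have := mul_lt_mul_of_pos_right hx' (mul_pos hn hq)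
      have l : (‖h‖ / (2 * √s) - ε * √s / ‖h‖) * (‖h‖ * √s) = ‖h‖ ^ 2 / 2 - ε * √s ^ 2 := by
        field_simp
      have l2 : -(inner ℝ z h / (‖h‖ * √s)) * (‖h‖ * √s) = - inner ℝ z h := by
        field_simp
      rw [l, l2, hqs] at this
      linarith
    have e4 : ε + -(‖z‖ ^ 2 + 2 * inner ℝ z h + ‖h‖ ^ 2) / (2 * s) - -‖z‖ ^ 2 / (2 * s)
        = (ε * s - ‖h‖ ^ 2 / 2 - inner ℝ z h) / s := by
      field_simp
      ring
    have : 0 ≤ (ε * s - ‖h‖ ^ 2 / 2 - inner ℝ z h) / s := by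
      apply div_nonneg _ hs.le
      linarith
    linarith
  · calc ∫⁻ x in T ⁻¹' Set.Iic c, g x ∂(gaussian d (m + h) s)
        ≤ ∫⁻ x in T ⁻¹' Set.Iic c, 1 ∂(gaussian d (m + h) s) := lintegral_mono fun x => hg1 x
      _ = _ := by simp

theorem stmt1 (d : ℕ) (hd : 1 ≤ d) (ᾱ r ε : ℝ) (hᾱ : ᾱ ∈ Set.Ioo (0 : ℝ) 1)
    (hr : 0 < r) (hε : 0 ≤ ε) (x₀ Δx : EuclideanSpace ℝ (Fin d)) (hΔx : ‖Δx‖ < r)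
    {Y : Type*} [MeasurableSpace Y]
    (κ : Kernel (EuclideanSpace ℝ (Fin d)) Y) [IsMarkovKernel κ]
    (y : Y) (hy : MeasurableSet ({y} : Set Y)) :
    (((gaussian d (Real.sqrt ᾱ • (x₀ + Δx)) (1 - ᾱ)).bind κ) ({y}ᶜ)).toReal ≤
      Real.exp ε * (((gaussian d (Real.sqrt ᾱ • x₀) (1 - ᾱ)).bind κ) ({y}ᶜ)).toReal +
        stdNormalCDF (r * Real.sqrt ᾱ / (2 * Real.sqrt (1 - ᾱ)) -
          ε * Real.sqrt (1 - ᾱ) / (r * Real.sqrt ᾱ)) := by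
  obtain ⟨h0, h1⟩ := hᾱ
  have hs : 0 < 1 - ᾱ := by linarith
  have hqa : 0 < √ᾱ := Real.sqrt_pos.mpr h0
  have hq : 0 < √(1 - ᾱ) := Real.sqrt_pos.mpr hs
  by_cases hΔ : Δx = 0
  · subst hΔ
    rw [add_zero]
    have e := Real.one_le_exp hε
    have hnn : 0 ≤ stdNormalCDF (r * √ᾱ / (2 * √(1 - ᾱ)) - ε * √(1 - ᾱ) / (r * √ᾱ)) :=
      ENNReal.toReal_nonneg
    have := mul_le_mul_of_nonneg_right e
      (ENNReal.toReal_nonneg (a := ((gaussian d (√ᾱ • x₀) (1 - ᾱ)).bind κ) ({y}ᶜ)))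
    linarith
  have hn : 0 < ‖Δx‖ := norm_pos_iff.mpr hΔ
  have hgm : Measurable fun x => κ x {y}ᶜ := κ.measurable_coe hy.compl
  have key := gaussian_bound d (√ᾱ • x₀) (√ᾱ • Δx) (1 - ᾱ) ε hs
    (smul_ne_zero hqa.ne' hΔ) (fun x => κ x {y}ᶜ) hgm (fun x => prob_le_one)
  have := gaussian_univ d (√ᾱ • x₀) (1 - ᾱ) hs
  have hfin : ∫⁻ x, κ x {y}ᶜ ∂(gaussian d (√ᾱ • x₀) (1 - ᾱ)) ≠ ⊤ := by
    refine ne_top_of_le_ne_top (measure_ne_top (gaussian d (√ᾱ • x₀) (1 - ᾱ)) Set.univ) ?_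
    calc _ ≤ ∫⁻ x, 1 ∂(gaussian d (√ᾱ • x₀) (1 - ᾱ)) := lintegral_mono fun x => prob_le_one
      _ = _ := by simp
  rw [Measure.bind_apply hy.compl κ.aemeasurable, Measure.bind_apply hy.compl κ.aemeasurable,
    smul_add]
  have hmono : ‖√ᾱ • Δx‖ / (2 * √(1 - ᾱ)) - ε * √(1 - ᾱ) / ‖√ᾱ • Δx‖ ≤
      r * √ᾱ / (2 * √(1 - ᾱ)) - ε * √(1 - ᾱ) / (r * √ᾱ) := by
    rw [norm_smul, Real.norm_of_nonneg hqa.le, mul_comm √ᾱ]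
    gcongr
  have key2 := key.trans (add_le_add_right (measure_mono (Set.Iic_subset_Iic.mpr hmono)) _)
  have hm := ENNReal.mul_ne_top (ENNReal.ofReal_ne_top (r := Real.exp ε)) hfin
  have key3 := ENNReal.toReal_mono (ENNReal.add_ne_top.mpr ⟨hm, measure_ne_top _ _⟩) key2
  rw [ENNReal.toReal_add hm (measure_ne_top _ _), ENNReal.toReal_mul,
    ENNReal.toReal_ofReal (Real.exp_pos ε).le] at key3
  exact key3
end

section
/- Let d ≥ 1, ᾱ ∈ (0,1), let 𝒴 be a finite nonempty label set, and let κ be a Markov kernel from ℝ^d to 𝒴. For x ∈ ℝ^d let A_x = (N(√ᾱ·x, (1−ᾱ)·I_d)).bind κ be the output label distribution of the randomized algorithm on input x. Suppose c_A ∈ 𝒴 and p_A, p_B ∈ (0,1) satisfy A_x({c_A}) ≥ p_A ≥ p_B ≥ max_{c ≠ c_A} A_x({c}). Then for every Δx ∈ ℝ^d with ‖Δx‖₂ < (√(1−ᾱ)/(2·√ᾱ))·(Φ⁻¹(p_A) − Φ⁻¹(p_B)), one has A_{x+Δx}({c_A}) > A_{x+Δx}({c}) for every c ≠ c_A; i.e.,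 the smoothed classifier Ã(x') = argmax_{c} A_{x'}({c}) returns c_A at x + Δx. -/
open MeasureTheory ProbabilityTheory Real

/-- The inverse `Φ⁻¹` of the standard normal cumulative distribution function. -/
noncomputable def stdNormalCDFInv : ℝ → ℝ := Function.invFun stdNormalCDF

namespace Smooth

lemma cdf_eq (t : ℝ) : stdNormalCDF t = cdf (gaussianReal 0 1) t := by
  rw [cdf_eq_real]; rfl

lemma cdf_strictMono : StrictMono stdNormalCDF := by
  intro a b hab
  unfold stdNormalCDF
  have hpos : 0 < gaussianReal 0 1 (Set.Ioc a b) := by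
    rw [pos_iff_ne_zero]
    intro h
    have := gaussianReal_absolutelyContinuous' 0 (one_ne_zero) h
    simp at this
    linarith
  have hun : Set.Iic b = Set.Iic a ∪ Set.Ioc a b := (Set.Iic_union_Ioc_eq_Iic hab.le).symm
  have hdis : Disjoint (Set.Iic a) (Set.Ioc a b) := Set.Iic_disjoint_Ioc le_rfl
  rw [hun, measure_union hdis measurableSet_Ioc,
    ENNReal.toReal_add (measure_ne_top _ _) (measure_ne_top _ _)]
  have := ENNReal.toReal_pos hpos.ne' (measure_ne_top _ _)
  linarith

lemma cdf_neg (t : ℝ) : stdNormalCDF (-t) = 1 - stdNormalCDF t := by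
  unfold stdNormalCDF
  have : NullSingletonClass (gaussianReal 0 1) := nullSingletonClass_gaussianReal one_ne_zero
  have h1 : gaussianReal 0 1 (Set.Iic (-t)) = gaussianReal 0 1 (Set.Ici t) := by
    have := gaussianReal_map_neg (μ := 0) (v := 1)
    rw [neg_zero] at this
    conv_lhs => rw [← this]
    rw [Measure.map_apply (by fun_prop) measurableSet_Iic]
    congr 1
    ext x; simp
  rw [h1, ← measure_congr (Ioi_ae_eq_Ici (μ := gaussianReal 0 1)), ← Set.compl_Iic]
  exact probReal_compl_eq_one_sub (μ := gaussianReal 0 1) measurableSet_Iic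

lemma cdf_cont : Continuous stdNormalCDF := by
  have : NullSingletonClass (gaussianReal 0 1) := nullSingletonClass_gaussianReal one_ne_zero
  have h : stdNormalCDF = cdf (gaussianReal 0 1) := funext cdf_eq
  rw [h, continuous_iff_continuousAt]
  intro x
  rw [(monotone_cdf _).continuousAt_iff_leftLim_eq_rightLim, StieltjesFunction.rightLim_eq]
  have h2 := (cdf (gaussianReal 0 1)).measure_singleton x
  rw [measure_cdf, measure_singleton] at h2
  have h3 := ENNReal.ofReal_eq_zero.1 h2.symm
  exact le_antisymm ((monotone_cdf _).leftLim_le le_rfl) (by linarith)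

lemma cdf_inv {p : ℝ} (hp : p ∈ Set.Ioo (0:ℝ) 1) : stdNormalCDF (stdNormalCDFInv p) = p := by
  unfold stdNormalCDFInv
  apply Function.invFun_eq
  have h : stdNormalCDF = cdf (gaussianReal 0 1) := funext cdf_eq
  have h0 := tendsto_cdf_atBot (gaussianReal 0 1)
  have h1 := tendsto_cdf_atTop (gaussianReal 0 1)
  rw [← h] at h0 h1
  obtain ⟨a, ha⟩ := (h0.eventually (gt_mem_nhds hp.1)).exists
  obtain ⟨b, hb⟩ := (h1.eventually (lt_mem_nhds hp.2)).exists
  exact mem_range_of_exists_le_of_exists_ge cdf_cont ⟨a, ha.le⟩ ⟨b, hb.le⟩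

lemma gauss_Iic (μ : ℝ) {σ : ℝ} (hσ : 0 < σ) (t : ℝ) :
    gaussianReal μ ((σ ^ 2).toNNReal) (Set.Iic (μ + σ * t)) = gaussianReal 0 1 (Set.Iic t) := by
  have h1 := gaussianReal_map_const_mul (μ := 0) (v := 1) σ
  have h2 := gaussianReal_map_add_const (μ := 0) (v := (σ ^ 2).toNNReal) μ
  have h3 : (NNReal.mk (σ ^ 2) (sq_nonneg _) * 1) = (σ ^ 2).toNNReal := by
    ext; simp [Real.coe_toNNReal _ (sq_nonneg σ)]
  rw [h3, mul_zero] at h1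
  rw [zero_add] at h2
  rw [← h2, ← h1, Measure.map_apply (by fun_prop) measurableSet_Iic,
    Measure.map_apply (by fun_prop) (measurableSet_preimage (by fun_prop) measurableSet_Iic)]
  congr 1
  ext x
  simp only [Set.mem_preimage, Set.mem_Iic]
  rw [add_comm, add_le_add_iff_left, mul_le_mul_iff_right₀ hσ]

/-- the density -/
noncomputable def dens (d : ℕ) (m : EuclideanSpace ℝ (Fin d)) (σ2 : ℝ)
    (x : EuclideanSpace ℝ (Fin d)) : ℝ :=
  (2 * π * σ2) ^ (-(d : ℝ) / 2) * Real.exp (-‖x - m‖ ^ 2 / (2 * σ2))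

variable {d : ℕ} {m : EuclideanSpace ℝ (Fin d)} {v : ℝ}

lemma dens_cont : Continuous (dens d m v) := by
  unfold dens; fun_prop

lemma dens_pos (hv : 0 < v) (x) : 0 < dens d m v x := by
  unfold dens; positivity

lemma integral_gaussian {E : Type*} [NormedAddCommGroup E] [NormedSpace ℝ E] (hv : 0 < v)
    (f : EuclideanSpace ℝ (Fin d) → E) :
    ∫ x, f x ∂(gaussian d m v) = ∫ x, dens d m v x • f x := by
  have : gaussian d m v = volume.withDensity fun x => ENNReal.ofReal (dens d m v x) := rfl
  rw [this, integral_withDensity_eq_integral_toReal_smul]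
  · congr with x
    rw [ENNReal.toReal_ofReal (dens_pos hv x).le]
  · exact dens_cont.measurable.ennreal_ofReal
  · simp

lemma integral_dens (hv : 0 < v) : ∫ x, dens d m v x = 1 := by
  have h : (fun x => dens d m v x) =
      fun x => (fun y => (2 * π * v) ^ (-(d : ℝ) / 2) * Real.exp (-(1 / (2 * v)) * ‖y‖ ^ 2)) (x - m) := by
    ext x
    simp only [dens]
    congr 2
    ring
  rw [h, integral_sub_right_eq_self
    (fun y => (2 * π * v) ^ (-(d : ℝ) / 2) * Real.exp (-(1 / (2 * v)) * ‖y‖ ^ 2)),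
    integral_const_mul, GaussianFourier.integral_rexp_neg_mul_sq_norm (by positivity)]
  have h2 : π / (1 / (2 * v)) = 2 * π * v := by field_simp
  rw [h2, finrank_euclideanSpace_fin, ← Real.rpow_add (by positivity)]
  rw [neg_div, neg_add_cancel, Real.rpow_zero]

lemma integrable_dens (hv : 0 < v) : Integrable (dens d m v) := by
  apply Integrable.of_integral_ne_zero
  rw [integral_dens hv]; exact one_ne_zero

lemma isProb (hv : 0 < v) : IsProbabilityMeasure (gaussian d m v) := by
  constructor
  have : gaussian d m v = volume.withDensity fun x => ENNReal.ofReal (dens d m v x) := rfl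
  rw [this, withDensity_apply _ MeasurableSet.univ, Measure.restrict_univ,
    ← ofReal_integral_eq_lintegral_ofReal (integrable_dens hv)
      (ae_of_all _ fun x => (dens_pos hv x).le), integral_dens hv]
  simp

open Complex in
lemma map_inner (hv : 0 < v) (u : EuclideanSpace ℝ (Fin d)) (hu : ‖u‖ = 1) :
    (gaussian d m v).map (fun z => inner ℝ u z) = gaussianReal (inner ℝ u m) v.toNNReal := by
  have := isProb (d := d) (m := m) hv
  have : IsProbabilityMeasure ((gaussian d m v).map (fun z => (inner ℝ u z : ℝ))) :=
    Measure.isProbabilityMeasure_map (by fun_prop)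
  apply Measure.ext_of_charFun
  ext t
  rw [charFun_gaussianReal, charFun_apply_real, integral_map (by fun_prop) (by fun_prop),
    integral_gaussian hv]
  have h : (fun x => dens d m v x • cexp (t * ((inner ℝ u x : ℝ) : ℂ) * I)) =
      fun x => (fun y => (((2 * π * v) ^ (-(d : ℝ) / 2) : ℝ) * cexp (t * ((inner ℝ u m : ℝ) : ℂ) * I)) *
        cexp (-(1 / (2 * v) : ℂ) * ‖y‖ ^ 2 + (t * I) * ((inner ℝ u y : ℝ) : ℂ))) (x - m) := by
    ext x
    simp only [dens, real_smul]
    push_cast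
    generalize (2 * π * v) ^ (-(d : ℝ) / 2) = C
    rw [mul_assoc (C : ℂ), ← Complex.exp_add, mul_assoc (C : ℂ), ← Complex.exp_add, inner_sub_right]
    congr 2
    push_cast
    ring
  have hb : (0:ℝ) < (1 / (2 * v) : ℂ).re := by
    have : (1 / (2 * v) : ℂ) = ((1 / (2 * v) : ℝ) : ℂ) := by push_cast; ring
    rw [this, ofReal_re]; positivity
  rw [h, integral_sub_right_eq_self (fun y => (((2 * π * v) ^ (-(d : ℝ) / 2) : ℝ) * cexp (t * ((inner ℝ u m : ℝ) : ℂ) * I)) *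
        cexp (-(1 / (2 * v) : ℂ) * ‖y‖ ^ 2 + (t * I) * ((inner ℝ u y : ℝ) : ℂ))), integral_const_mul,
    GaussianFourier.integral_cexp_neg_mul_sq_norm_add hb, hu]
  have hvc : (v : ℂ) ≠ 0 := by exact_mod_cast hv.ne'
  have h2 : (π : ℂ) / (1 / (2 * v)) = ((2 * π * v : ℝ) : ℂ) := by push_cast; field_simp
  have h3 : (((2 * π * v : ℝ) : ℂ)) ^ ((d : ℂ) / 2) = (((2 * π * v) ^ ((d : ℝ) / 2) : ℝ) : ℂ) := by
    rw [ofReal_cpow (by positivity)]; push_cast; rfl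
  rw [h2, finrank_euclideanSpace_fin, h3]
  have h4 : (((2 * π * v) ^ (-(d : ℝ) / 2) : ℝ) : ℂ) * (((2 * π * v) ^ ((d : ℝ) / 2) : ℝ) : ℂ) = 1 := by
    rw [← ofReal_mul, ← Real.rpow_add (by positivity), neg_div, neg_add_cancel, Real.rpow_zero]
    simp
  rw [Real.coe_toNNReal _ hv.le]
  calc _ = ((((2 * π * v) ^ (-(d : ℝ) / 2) : ℝ) : ℂ) * (((2 * π * v) ^ ((d : ℝ) / 2) : ℝ) : ℂ)) *
      (cexp (t * ((inner ℝ u m : ℝ) : ℂ) * I) * cexp ((t * I) ^ 2 * ((1:ℝ):ℂ) ^ 2 / (4 * (1 / (2 * v))))) := by ring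
    _ = _ := by
      rw [h4, one_mul, ← Complex.exp_add]
      congr 1
      rw [mul_pow, I_sq]
      field_simp
      push_cast
      ring

lemma halfspace {σ : ℝ} (hσ : 0 < σ) (u : EuclideanSpace ℝ (Fin d)) (hu : ‖u‖ = 1) (t : ℝ) :
    (gaussian d m (σ ^ 2)).real {z | inner ℝ u z ≤ inner ℝ u m + σ * t} = stdNormalCDF t := by
  unfold stdNormalCDF
  rw [← gauss_Iic (inner ℝ u m) hσ t, ← map_inner (by positivity) u hu,
    Measure.map_apply (by fun_prop) measurableSet_Iic]
  rfl

/-- Neyman-Pearson comparison. -/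
lemma np {σ : ℝ} (hσ : 0 < σ) (δ : EuclideanSpace ℝ (Fin d)) (hδ : δ ≠ 0)
    (f : EuclideanSpace ℝ (Fin d) → ℝ) (hf : Measurable f) (hf0 : ∀ z, 0 ≤ f z)
    (hf1 : ∀ z, f z ≤ 1) (t : ℝ) (h : stdNormalCDF t ≤ ∫ z, f z ∂(gaussian d m (σ ^ 2))) :
    stdNormalCDF (t - ‖δ‖ / σ) ≤ ∫ z, f z ∂(gaussian d (m + δ) (σ ^ 2)) := by
  have hv : 0 < σ ^ 2 := by positivity
  have hr : 0 < ‖δ‖ := norm_pos_iff.2 hδ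
  obtain ⟨u, hu, hδu⟩ : ∃ u : EuclideanSpace ℝ (Fin d), ‖u‖ = 1 ∧ δ = ‖δ‖ • u :=
    ⟨‖δ‖⁻¹ • δ, norm_smul_inv_norm (𝕜 := ℝ) hδ, by
      rw [smul_smul, mul_inv_cancel₀ hr.ne', one_smul]⟩
  generalize ‖δ‖ = r at hr hδu ⊢
  have huu : (inner ℝ u u : ℝ) = 1 := by rw [real_inner_self_eq_norm_sq, hu]; norm_num
  set H : Set (EuclideanSpace ℝ (Fin d)) := {z | inner ℝ u z ≤ inner ℝ u m + σ * t} with hH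
  have hHm : MeasurableSet H := measurableSet_le (by fun_prop) (by fun_prop)
  have hP := halfspace (m := m) hσ u hu t
  have hP' : (gaussian d (m + δ) (σ ^ 2)).real H = stdNormalCDF (t - r / σ) := by
    rw [← halfspace (m := m + δ) hσ u hu (t - r / σ)]
    congr 1
    ext z
    rw [hH, Set.mem_ofPred_eq, Set.mem_ofPred_eq, inner_add_right, hδu, inner_smul_right, huu]
    have : inner ℝ u m + r * 1 + σ * (t - r / σ) = inner ℝ u m + σ * t := by field_simp; ring
    rw [this]
  set K := Real.exp (r * (σ * t) / σ ^ 2 - r ^ 2 / (2 * σ ^ 2)) with hK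
  have hKpos : 0 < K := Real.exp_pos _
  set g : EuclideanSpace ℝ (Fin d) → ℝ := H.indicator 1 with hg
  have hgm : Measurable g := measurable_one.indicator hHm
  have ratio : ∀ z, dens d (m + δ) (σ ^ 2) z = dens d m (σ ^ 2) z *
      Real.exp (r * (inner ℝ u z - inner ℝ u m) / σ ^ 2 - r ^ 2 / (2 * σ ^ 2)) := by
    intro z
    simp only [dens]
    generalize (2 * π * σ ^ 2) ^ (-(d : ℝ) / 2) = C
    rw [mul_assoc, ← Real.exp_add]
    congr 2
    have : z - (m + δ) = (z - m) - r • u := by rw [← hδu]; abel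
    rw [this, norm_sub_sq_real, inner_smul_right, norm_smul, hu, ← inner_sub_right,
      real_inner_comm u, Real.norm_of_nonneg hr.le]
    field_simp
    ring
  have pw : ∀ z, 0 ≤ (f z - g z) * (dens d (m + δ) (σ ^ 2) z - K * dens d m (σ ^ 2) z) := by
    intro z
    have hp := dens_pos (d := d) (m := m) hv z
    rw [ratio]
    by_cases hz : z ∈ H
    · have h1 : g z = 1 := by simp [hg, hz]
      rw [h1]
      have hz' : inner ℝ u z ≤ inner ℝ u m + σ * t := hz
      apply mul_nonneg_of_nonpos_of_nonpos
      · linarith [hf1 z]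
      · rw [mul_comm K, ← mul_sub]
        apply mul_nonpos_of_nonneg_of_nonpos hp.le
        rw [sub_nonpos, hK]
        gcongr
        linarith
    · have h1 : g z = 0 := by simp [hg, hz]
      rw [h1]
      have hz' : inner ℝ u m + σ * t < inner ℝ u z := not_le.1 hz
      apply mul_nonneg
      · linarith [hf0 z]
      · rw [mul_comm K, ← mul_sub]
        apply mul_nonneg hp.le
        rw [sub_nonneg, hK]
        gcongr
        linarith
  have ib : ∀ (m' : EuclideanSpace ℝ (Fin d)) (k : EuclideanSpace ℝ (Fin d) → ℝ), Measurable k →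
      (∀ z, 0 ≤ k z) → (∀ z, k z ≤ 1) → Integrable (fun z => dens d m' (σ ^ 2) z * k z) := by
    intro m' k hk h0 h1
    refine (integrable_dens (d := d) (m := m') hv).mul_bdd (c := 1) hk.aestronglyMeasurable
      (ae_of_all _ fun z => ?_)
    rw [Real.norm_of_nonneg (h0 z)]; exact h1 z
  have hg0 : ∀ z, 0 ≤ g z := fun z => Set.indicator_nonneg (by simp) z
  have hg1 : ∀ z, g z ≤ 1 := fun z => Set.indicator_le_self' (by simp) z
  have igP : ∀ m', ∫ z, dens d m' (σ ^ 2) z * g z = (gaussian d m' (σ ^ 2)).real H := by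
    intro m'
    rw [← integral_indicator_one hHm, integral_gaussian hv]
    rfl
  have ifP : ∀ m', ∫ z, f z ∂(gaussian d m' (σ ^ 2)) = ∫ z, dens d m' (σ ^ 2) z * f z := by
    intro m'
    rw [integral_gaussian hv]; rfl
  have key := integral_nonneg (μ := volume) (Pi.le_def.2 pw)
  have e : (fun z => (f z - g z) * (dens d (m + δ) (σ ^ 2) z - K * dens d m (σ ^ 2) z)) =
      fun z => (dens d (m + δ) (σ ^ 2) z * f z - dens d (m + δ) (σ ^ 2) z * g z) -
        K * (dens d m (σ ^ 2) z * f z - dens d m (σ ^ 2) z * g z) := by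
    ext z; ring
  have i1 := ib (m + δ) f hf hf0 hf1
  have i2 := ib (m + δ) g hgm hg0 hg1
  have i3 := ib m f hf hf0 hf1
  have i4 := ib m g hgm hg0 hg1
  have i12 : Integrable (fun z => dens d (m + δ) (σ ^ 2) z * f z -
      dens d (m + δ) (σ ^ 2) z * g z) := i1.sub i2
  have i34 : Integrable (fun z => K * (dens d m (σ ^ 2) z * f z - dens d m (σ ^ 2) z * g z)) :=
    (i3.sub i4).const_mul K
  rw [e, integral_sub i12 i34, integral_sub i1 i2, integral_const_mul,
    integral_sub i3 i4, igP, igP, ← ifP, ← ifP, hP, hP'] at key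
  have := mul_nonneg hKpos.le (sub_nonneg.2 h)
  linarith

end Smooth

theorem stmt9 (d : ℕ) (hd : 1 ≤ d) (ᾱ : ℝ) (hᾱ : ᾱ ∈ Set.Ioo (0 : ℝ) 1)
    {Y : Type*} [MeasurableSpace Y] [MeasurableSingletonClass Y] [Fintype Y] [Nonempty Y]
    (κ : Kernel (EuclideanSpace ℝ (Fin d)) Y) [IsMarkovKernel κ]
    (A : EuclideanSpace ℝ (Fin d) → Measure Y)
    (hA : ∀ x, A x = (gaussian d (Real.sqrt ᾱ • x) (1 - ᾱ)).bind κ)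
    (x : EuclideanSpace ℝ (Fin d)) (cA : Y) (pA pB : ℝ)
    (hpA : pA ∈ Set.Ioo (0 : ℝ) 1) (hpB : pB ∈ Set.Ioo (0 : ℝ) 1)
    (h1 : pA ≤ ((A x) {cA}).toReal) (h2 : pB ≤ pA)
    (h3 : ∀ c : Y, c ≠ cA → ((A x) {c}).toReal ≤ pB) :
    ∀ Δx : EuclideanSpace ℝ (Fin d),
      ‖Δx‖ < (Real.sqrt (1 - ᾱ) / (2 * Real.sqrt ᾱ)) * (stdNormalCDFInv pA - stdNormalCDFInv pB) →
      ∀ c : Y, c ≠ cA → ((A (x + Δx)) {c}).toReal < ((A (x + Δx)) {cA}).toReal := by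
  intro Δx hΔ c hc
  have ha : 0 < ᾱ := hᾱ.1
  have hb : 0 < 1 - ᾱ := by linarith [hᾱ.2]
  set σ := Real.sqrt (1 - ᾱ) with hσdef
  have hσ : 0 < σ := Real.sqrt_pos.2 hb
  have hσ2 : 1 - ᾱ = σ ^ 2 := (Real.sq_sqrt hb.le).symm
  have hsa : 0 < Real.sqrt ᾱ := Real.sqrt_pos.2 ha
  have hmeas : ∀ c : Y, Measurable fun z => (κ z).real {c} := fun c =>
    (κ.measurable_coe (measurableSet_singleton c)).ennreal_toReal
  have hAi : ∀ y c, ((A y) {c}).toReal =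
      ∫ z, (κ z).real {c} ∂(gaussian d (Real.sqrt ᾱ • y) (σ ^ 2)) := by
    intro y c
    rw [hA, Measure.bind_apply (measurableSet_singleton c) κ.aemeasurable, ← hσ2,
      ← integral_toReal (κ.measurable_coe (measurableSet_singleton c)).aemeasurable
        (ae_of_all _ fun z => measure_lt_top _ _)]
    rfl
  by_cases h0 : Δx = 0
  · subst h0
    rw [add_zero]
    rw [norm_zero] at hΔ
    have hne : pB ≠ pA := by
      rintro rfl
      simp at hΔ
    have := h3 c hc
    have := lt_of_le_of_ne h2 hne
    linarith
  set δ := Real.sqrt ᾱ • Δx with hδ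
  have hδ0 : δ ≠ 0 := smul_ne_zero hsa.ne' h0
  have hn : ‖δ‖ = Real.sqrt ᾱ * ‖Δx‖ := by rw [hδ, norm_smul, Real.norm_of_nonneg hsa.le]
  have hlt : stdNormalCDFInv pB + ‖δ‖ / σ < stdNormalCDFInv pA - ‖δ‖ / σ := by
    have h5 : ‖δ‖ / σ < (stdNormalCDFInv pA - stdNormalCDFInv pB) / 2 := by
      rw [hn, div_lt_iff₀ hσ]
      calc _ < Real.sqrt ᾱ * (σ / (2 * Real.sqrt ᾱ) *
            (stdNormalCDFInv pA - stdNormalCDFInv pB)) := by gcongr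
        _ = _ := by field_simp
    linarith
  have hm : Real.sqrt ᾱ • (x + Δx) = Real.sqrt ᾱ • x + δ := smul_add _ _ _
  have k1 := Smooth.np (m := Real.sqrt ᾱ • x) hσ δ hδ0 (fun z => (κ z).real {cA}) (hmeas cA)
    (fun z => measureReal_nonneg) (fun z => measureReal_le_one) (stdNormalCDFInv pA)
    (by rw [Smooth.cdf_inv hpA, ← hAi]; exact h1)
  have hcomp : ∀ m, ∫ z, (1 - (κ z).real {c}) ∂(gaussian d m (σ ^ 2)) =
      1 - ∫ z, (κ z).real {c} ∂(gaussian d m (σ ^ 2)) := by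
    intro m
    haveI := Smooth.isProb (d := d) (m := m) (v := σ ^ 2) (by positivity)
    rw [integral_sub (integrable_const _)]
    · simp
    · refine Integrable.of_bound (hmeas c).aestronglyMeasurable 1 (ae_of_all _ fun z => ?_)
      rw [Real.norm_of_nonneg measureReal_nonneg]
      exact measureReal_le_one
  have k2 := Smooth.np (m := Real.sqrt ᾱ • x) hσ δ hδ0 (fun z => 1 - (κ z).real {c})
    (measurable_const.sub (hmeas c))
    (fun z => sub_nonneg.2 measureReal_le_one) (fun z => sub_le_self _ measureReal_nonneg)
    (-stdNormalCDFInv pB)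
    (by rw [Smooth.cdf_neg, Smooth.cdf_inv hpB, hcomp, ← hAi]; linarith [h3 c hc])
  rw [hcomp, ← hm, ← hAi, ← neg_add', Smooth.cdf_neg] at k2
  rw [← hm, ← hAi] at k1
  have := Smooth.cdf_strictMono hlt
  linarith
end
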